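/- arXiv:0805.2047 — 2 statements merged into one kernel-verified Lean document; each statement's English description precedes it below -/
import Mathlib

section
/- If 1 < q < r are real numbers with ⌈q⌉ = ⌈r⌉, then U_q' ⊆ U_r'; that is, every sequence that is the unique expansion in base q of some number is also the unique expansion in base r of some number. -/
/-!
Let `M = ⌈q⌉ - 1` be the largest digit. A sequence `c` with digits in `{0, …, M}` is univoque in
base `q` iff for every `n`, writing `t` for the tail `c_{n+1} c_{n+2} …` and `t̄` for its
digitwise complement `M - t`,

* `c_n < M` implies that the value of `t` is less than `1`, and
* `c_n > 0` implies that the value of `t̄` is less than `1`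

(`univoque_of_tails` and `tails_of_univoque`). Necessity holds because otherwise `c_n` can be
raised (lowered) by one and the tail replaced by an expansion of its value minus (plus) one, which
exists since every number in `[0, M / (q - 1)]` has a greedy expansion (`exists_expansion`).
Sufficiency follows by looking at the first index where two expansions differ.

The value of a fixed digit sequence is nonincreasing in the base (`seqVal_anti`), and `M` depends
only on `⌈q⌉`, so both conditions pass from `q` to `r`.
-/

noncomputable section

/-- The largest integer smaller than `q`, as a natural number (for `q > 1` this is `⌈q⌉ - 1`). -/
def topDigit (q : ℝ) : ℕ := ⌈q⌉.toNat - 1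

/-- Greedy digit associated to a remainder `y` : the largest nonnegative integer `b` with
`b < q` and `b ≤ q * y`. -/
def gDigit (q y : ℝ) : ℕ := min (topDigit q) ⌊q * y⌋₊

/-- Remainders of the greedy algorithm in base `q` starting from `x`. -/
def gRem (q x : ℝ) : ℕ → ℝ
  | 0 => x
  | n + 1 => q * gRem q x n - gDigit q (gRem q x n)

/-- The greedy expansion of `x` in base `q`, `0`-indexed: `greedy q x n` is the digit `b_{n+1}`,
i.e. the largest integer smaller than `q` such that `∑_{i ≤ n} (greedy q x i) / q^(i+1) ≤ x`. -/
def greedy (q x : ℝ) (n : ℕ) : ℕ := gDigit q (gRem q x n)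

/-- Quasi-greedy digit associated to a remainder `y` : the largest nonnegative integer `b` with
`b < q` and `b < q * y` (it is `0` when no such integer exists, matching the convention that the
quasi-greedy expansion of `0` is `0^∞`). -/
def qgDigit (q y : ℝ) : ℕ := min (topDigit q) (⌈q * y⌉.toNat - 1)

/-- Remainders of the quasi-greedy algorithm in base `q` starting from `x`. -/
def qgRem (q x : ℝ) : ℕ → ℝ
  | 0 => x
  | n + 1 => q * qgRem q x n - qgDigit q (qgRem q x n)

/-- The quasi-greedy expansion of `x` in base `q`, `0`-indexed: `quasiGreedy q x n` is the digit
`a_{n+1}`, i.e. the largest integer smaller than `q` with `∑_{i ≤ n} (quasiGreedy q x i) / q^(i+1) < x`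
(with the convention `quasiGreedy q 0 = 0^∞`). -/
def quasiGreedy (q x : ℝ) (n : ℕ) : ℕ := qgDigit q (qgRem q x n)

/-- `alphaSeq q` is the quasi-greedy expansion of `1` in base `q` (`0`-indexed:
`alphaSeq q (i-1) = α_i(q)`). -/
def alphaSeq (q : ℝ) : ℕ → ℕ := quasiGreedy q 1

/-- Strict lexicographic order on digit sequences. -/
def lexLt (a b : ℕ → ℕ) : Prop := ∃ n, (∀ i, i < n → a i = b i) ∧ a n < b n

/-- Lexicographic order on digit sequences. -/
def lexLe (a b : ℕ → ℕ) : Prop := lexLt a b ∨ a = b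

/-- `c` is an expansion of `x` in base `q`: the digits are nonnegative integers smaller than `q`
and `x = ∑_{i≥0} c_i / q^(i+1)`. -/
def IsExpansion (q : ℝ) (c : ℕ → ℕ) (x : ℝ) : Prop :=
  (∀ i, (c i : ℝ) < q) ∧ x = ∑' i : ℕ, (c i : ℝ) / q ^ (i + 1)

/-- The interval `J_q = [0, (⌈q⌉-1)/(q-1)]` of numbers having an expansion in base `q`. -/
def Jset (q : ℝ) : Set ℝ := Set.Icc 0 (((⌈q⌉ : ℝ) - 1) / (q - 1))

/-- `USet q` is the set `𝒰_q` of numbers `x ∈ J_q` having a unique expansion in base `q`. -/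
def USet (q : ℝ) : Set ℝ := {x | x ∈ Jset q ∧ ∃! c, IsExpansion q c x}

/-- `USeq q` is the set `𝒰_q'` of univoque sequences in base `q`, i.e. sequences that are the
unique expansion in base `q` of some number. -/
def USeq (q : ℝ) : Set (ℕ → ℕ) :=
  {c | ∃ x, IsExpansion q c x ∧ ∀ c', IsExpansion q c' x → c' = c}

/-- The set `𝒰` of univoque bases: `q > 1` such that `1` has a unique expansion in base `q`. -/
def UnivBases : Set ℝ := {q | 1 < q ∧ ∃! c, IsExpansion q c 1}

/-- The set `𝒱_q`: numbers `x ∈ J_q` whose quasi-greedy expansion `(a_i)` satisfies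
`overline{a_{n+1} a_{n+2} …} ≤ α_1 α_2 …` whenever `a_n > 0`. -/
def VSet (q : ℝ) : Set ℝ :=
  {x | x ∈ Jset q ∧ ∀ n, 0 < quasiGreedy q x n →
    lexLe (fun i => topDigit q - quasiGreedy q x (n + 1 + i)) (alphaSeq q)}

/-- `VSeq q` is the set `𝒱_q'` of quasi-greedy expansions of elements of `𝒱_q`. -/
def VSeq (q : ℝ) : Set (ℕ → ℕ) := (fun x => quasiGreedy q x) '' VSet q

/-- The set `𝒱` of bases `q > 1` with `overline{α_{k+1} α_{k+2} …} ≤ α_1 α_2 …` for all `k ≥ 1`. -/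
def VBases : Set ℝ :=
  {q | 1 < q ∧ ∀ k, 1 ≤ k → lexLe (fun i => topDigit q - alphaSeq q (k + i)) (alphaSeq q)}

/-- A digit sequence is infinite if it has infinitely many nonzero terms. -/
def InfiniteSeq (c : ℕ → ℕ) : Prop := ∀ N, ∃ i, N ≤ i ∧ c i ≠ 0

/-- A digit sequence is ultimately periodic if some tail of it is periodic. -/
def UltimatelyPeriodic (c : ℕ → ℕ) : Prop := ∃ n p, 0 < p ∧ ∀ i, n ≤ i → c (i + p) = c i

end

noncomputable section

/-- The value `∑ c_i / q^(i+1)` of a digit sequence in base `q`. -/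
def seqVal (q : ℝ) (c : ℕ → ℕ) : ℝ := ∑' i : ℕ, (c i : ℝ) / q ^ (i + 1)

lemma natCast_lt_iff_le_topDigit {q : ℝ} (hq : 1 < q) (k : ℕ) : (k : ℝ) < q ↔ k ≤ topDigit q := by
  have h1 : (1 : ℤ) < ⌈q⌉ := Int.lt_ceil.2 (by exact_mod_cast hq)
  have h2 : (k : ℤ) < ⌈q⌉ ↔ (k : ℝ) < q := by
    rw [Int.lt_ceil]; norm_cast
  rw [← h2, topDigit]
  omega

lemma topDigit_lt {q : ℝ} (hq : 1 < q) : (topDigit q : ℝ) < q :=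
  (natCast_lt_iff_le_topDigit hq _).2 le_rfl

lemma le_topDigit_add_one {q : ℝ} (hq : 1 < q) : q ≤ topDigit q + 1 := by
  by_contra! h
  have := (natCast_lt_iff_le_topDigit hq (topDigit q + 1)).1 (by push_cast; exact h)
  omega

lemma hasSum_const_digit {q : ℝ} (hq : 1 < q) (M : ℝ) :
    HasSum (fun i : ℕ => M / q ^ (i + 1)) (M / (q - 1)) := by
  have h := (hasSum_geometric_of_lt_one (inv_nonneg.2 (by linarith : (0 : ℝ) ≤ q))
    (inv_lt_one_of_one_lt₀ hq)).mul_left (M / q)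
  have hq0 : q ≠ 0 := by linarith
  have hq1 : q - 1 ≠ 0 := by linarith
  have hf : (fun i : ℕ => M / q ^ (i + 1)) = fun i : ℕ => M / q * q⁻¹ ^ i := by
    funext i
    rw [inv_pow, pow_succ]
    field_simp
  have hv : M / (q - 1) = M / q * (1 - q⁻¹)⁻¹ := by
    have : 1 - q⁻¹ = (q - 1) / q := by field_simp
    rw [this]
    field_simp
  rw [hf, hv]
  exact h

lemma summable_digits {q : ℝ} (hq : 1 < q) {M : ℕ} {c : ℕ → ℕ} (hc : ∀ i, c i ≤ M) :
    Summable (fun i : ℕ => (c i : ℝ) / q ^ (i + 1)) := by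
  refine Summable.of_nonneg_of_le (fun i => by positivity) (fun i => ?_)
    (hasSum_const_digit hq (M : ℝ)).summable
  have : (c i : ℝ) ≤ M := by exact_mod_cast hc i
  gcongr

lemma seqVal_nonneg {q : ℝ} (hq : 1 < q) (c : ℕ → ℕ) : 0 ≤ seqVal q c :=
  tsum_nonneg fun i => by positivity

lemma seqVal_compl {q : ℝ} (hq : 1 < q) {M : ℕ} {c : ℕ → ℕ} (hc : ∀ i, c i ≤ M) :
    seqVal q (fun i => M - c i) = M / (q - 1) - seqVal q c := by
  have h := (hasSum_const_digit hq (M : ℝ)).sub (summable_digits hq hc).hasSum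
  rw [seqVal, seqVal, ← h.tsum_eq]
  congr 1
  funext i
  rw [Nat.cast_sub (hc i), sub_div]

lemma seqVal_anti {q r : ℝ} (hq : 1 < q) (hqr : q ≤ r) {M : ℕ} {c : ℕ → ℕ}
    (hc : ∀ i, c i ≤ M) : seqVal r c ≤ seqVal q c := by
  refine Summable.tsum_le_tsum (fun i => ?_) (summable_digits (hq.trans_le hqr) hc)
    (summable_digits hq hc)
  gcongr

lemma seqVal_split {q : ℝ} (hq : 1 < q) {M : ℕ} {c : ℕ → ℕ} (hc : ∀ i, c i ≤ M) (n : ℕ) :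
    seqVal q c = ∑ i ∈ Finset.range n, (c i : ℝ) / q ^ (i + 1)
      + (c n + seqVal q (fun i => c (n + 1 + i))) / q ^ (n + 1) := by
  rw [seqVal, ← (summable_digits hq hc).sum_add_tsum_nat_add (n + 1), Finset.sum_range_succ,
    add_assoc, add_div, seqVal, ← tsum_div_const]
  congr 3
  funext i
  rw [div_div, ← pow_add, show n + 1 + i = i + (n + 1) by ring]
  congr 2
  ring

/-- Two sequences agreeing before index `n` have the same value iff the remainders from index `n`
on agree. -/
lemma seqVal_eq_iff {q : ℝ} (hq : 1 < q) {M : ℕ} {c d : ℕ → ℕ} (hc : ∀ i, c i ≤ M)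
    (hd : ∀ i, d i ≤ M) {n : ℕ} (h : ∀ i < n, c i = d i) :
    seqVal q c = seqVal q d ↔
      c n + seqVal q (fun i => c (n + 1 + i)) = d n + seqVal q (fun i => d (n + 1 + i)) := by
  rw [seqVal_split hq hc n, seqVal_split hq hd n]
  have : ∑ i ∈ Finset.range n, (c i : ℝ) / q ^ (i + 1)
      = ∑ i ∈ Finset.range n, (d i : ℝ) / q ^ (i + 1) :=
    Finset.sum_congr rfl fun i hi => by rw [h i (Finset.mem_range.1 hi)]
  rw [this, add_right_inj, div_left_inj' (by positivity)]

/-- The greedy remainders stay in `[0, M / (q - 1)]`; the upper bound uses `q ≤ M + 1`. -/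
lemma gRem_mem {q : ℝ} (hq : 1 < q) {x : ℝ} (h0 : 0 ≤ x) (h1 : x ≤ topDigit q / (q - 1)) (n : ℕ) :
    0 ≤ gRem q x n ∧ gRem q x n ≤ topDigit q / (q - 1) := by
  have hq1 : 0 < q - 1 := by linarith
  induction n with
  | zero => exact ⟨h0, h1⟩
  | succ n ih =>
    obtain ⟨ha, hb⟩ := ih
    simp only [gRem, gDigit]
    set y := gRem q x n
    have hy : 0 ≤ q * y := by positivity
    have hfl := Nat.floor_le hy
    have hlt := Nat.lt_floor_add_one (q * y)
    rcases le_total (topDigit q) ⌊q * y⌋₊ with h | h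
    · rw [min_eq_left h]
      have h' : (topDigit q : ℝ) ≤ ⌊q * y⌋₊ := by exact_mod_cast h
      refine ⟨by linarith, ?_⟩
      rw [le_div_iff₀ hq1] at hb ⊢
      nlinarith
    · rw [min_eq_right h]
      refine ⟨by linarith, ?_⟩
      have : (1 : ℝ) ≤ topDigit q / (q - 1) := by
        rw [le_div_iff₀ hq1]
        linarith [le_topDigit_add_one hq]
      linarith

lemma exists_expansion {q : ℝ} (hq : 1 < q) {x : ℝ} (h0 : 0 ≤ x)
    (h1 : x ≤ topDigit q / (q - 1)) :
    ∃ c : ℕ → ℕ, (∀ i, c i ≤ topDigit q) ∧ seqVal q c = x := by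
  have hq0 : 0 < q := by linarith
  refine ⟨greedy q x, fun i => min_le_left _ _, HasSum.tsum_eq ?_⟩
  rw [hasSum_iff_tendsto_nat_of_nonneg (fun i => by positivity)]
  have hpart : ∀ n, ∑ i ∈ Finset.range n, (greedy q x i : ℝ) / q ^ (i + 1)
      = x - gRem q x n * (q⁻¹) ^ n := by
    intro n
    induction n with
    | zero => simp [gRem]
    | succ n ih =>
      rw [Finset.sum_range_succ, ih]
      simp only [gRem, greedy, inv_pow]
      field_simp
      ring
  simp_rw [hpart]
  have hgeo : Filter.Tendsto (fun n : ℕ => (topDigit q / (q - 1)) * (q⁻¹) ^ n) Filter.atTop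
      (nhds 0) := by
    simpa using (tendsto_pow_atTop_nhds_zero_of_lt_one (inv_nonneg.2 hq0.le)
      (inv_lt_one_of_one_lt₀ hq)).const_mul (topDigit q / (q - 1))
  have hrem : Filter.Tendsto (fun n : ℕ => gRem q x n * (q⁻¹) ^ n) Filter.atTop (nhds 0) := by
    refine squeeze_zero (fun n => ?_) (fun n => ?_) hgeo
    · have := (gRem_mem hq h0 h1 n).1
      positivity
    · have := (gRem_mem hq h0 h1 n).2
      gcongr
  simpa using hrem.const_sub x

/-- Uniqueness forbids replacing the digit `c n` by another digit `d` when the new remainder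
`c n + (value of the tail) - d` still lies in `[0, M / (q - 1)]`. -/
lemma digit_eq_of_univoque {q : ℝ} (hq : 1 < q) {c : ℕ → ℕ} (hc : ∀ i, c i ≤ topDigit q)
    (huniq : ∀ c' : ℕ → ℕ, (∀ i, c' i ≤ topDigit q) → seqVal q c' = seqVal q c → c' = c)
    (n d : ℕ) (hd : d ≤ topDigit q)
    (h0 : 0 ≤ c n + seqVal q (fun i => c (n + 1 + i)) - d)
    (h1 : c n + seqVal q (fun i => c (n + 1 + i)) - d ≤ topDigit q / (q - 1)) : d = c n := by
  obtain ⟨e, he, hev⟩ := exists_expansion hq h0 h1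
  let c' : ℕ → ℕ := fun i => if i < n then c i else if i = n then d else e (i - (n + 1))
  have hc' : ∀ i, c' i ≤ topDigit q := by
    intro i
    simp only [c']
    split_ifs
    exacts [hc i, hd, he _]
  have hn : c' n = d := by simp [c']
  have htail : (fun i => c' (n + 1 + i)) = e := by
    funext i
    have h1 : ¬ n + 1 + i < n := by omega
    have h2 : n + 1 + i ≠ n := by omega
    simp [c', h1, h2]
  have hval : seqVal q c' = seqVal q c := by
    rw [seqVal_eq_iff hq hc' hc (n := n) (fun i hi => by simp [c', hi]), hn, htail, hev]
    ring
  rw [← hn, huniq c' hc' hval]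

lemma tails_of_univoque {q : ℝ} (hq : 1 < q) {c : ℕ → ℕ} (hc : ∀ i, c i ≤ topDigit q)
    (huniq : ∀ c' : ℕ → ℕ, (∀ i, c' i ≤ topDigit q) → seqVal q c' = seqVal q c → c' = c)
    (n : ℕ) :
    (c n < topDigit q → seqVal q (fun i => c (n + 1 + i)) < 1) ∧
    (0 < c n → seqVal q (fun i => topDigit q - c (n + 1 + i)) < 1) := by
  have hcompl := seqVal_compl hq (fun i => hc (n + 1 + i))
  have hnn := seqVal_nonneg hq (fun i => c (n + 1 + i))
  have hnn' := seqVal_nonneg hq (fun i => topDigit q - c (n + 1 + i))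
  constructor
  · intro hlt
    by_contra! hge
    have := digit_eq_of_univoque hq hc huniq n (c n + 1) hlt (by push_cast; linarith)
      (by push_cast; linarith)
    omega
  · intro hpos
    by_contra! hge
    have hcast : ((c n - 1 : ℕ) : ℝ) = c n - 1 := by rw [Nat.cast_sub hpos]; simp
    have := digit_eq_of_univoque hq hc huniq n (c n - 1) ((Nat.sub_le _ _).trans (hc n))
      (by rw [hcast]; linarith) (by rw [hcast]; linarith)
    omega

lemma univoque_of_tails {q : ℝ} (hq : 1 < q) {M : ℕ} {c : ℕ → ℕ} (hc : ∀ i, c i ≤ M)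
    (h : ∀ n, (c n < M → seqVal q (fun i => c (n + 1 + i)) < 1) ∧
      (0 < c n → seqVal q (fun i => M - c (n + 1 + i)) < 1))
    {c' : ℕ → ℕ} (hc' : ∀ i, c' i ≤ M) (hval : seqVal q c' = seqVal q c) : c' = c := by
  by_contra hne
  have hex : ∃ n, c' n ≠ c n := Function.ne_iff.1 hne
  classical
  set n := Nat.find hex
  have hn : c' n ≠ c n := Nat.find_spec hex
  have hlt : ∀ i < n, c' i = c i := fun i hi => not_not.1 (Nat.find_min hex hi)
  have heq := (seqVal_eq_iff hq hc' hc hlt).1 hval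
  have hcompl := seqVal_compl hq (fun i => hc (n + 1 + i))
  have hcompl' := seqVal_compl hq (fun i => hc' (n + 1 + i))
  have hnn := seqVal_nonneg hq (fun i => c' (n + 1 + i))
  have hnn' := seqVal_nonneg hq (fun i => M - c' (n + 1 + i))
  rcases lt_or_gt_of_ne hn with hl | hg
  · have h2 := (h n).2 (by omega)
    have h3 : (c' n : ℝ) + 1 ≤ c n := by exact_mod_cast hl
    linarith
  · have h2 := (h n).1 (hg.trans_le (hc' n))
    have h3 : (c n : ℝ) + 1 ≤ c' n := by exact_mod_cast hg
    linarith

end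

/-- If `1 < q < r` and `⌈q⌉ = ⌈r⌉`, then `𝒰_q' ⊆ 𝒰_r'`. -/
theorem USeq_subset_of_lt (q r : ℝ) (hq : 1 < q) (hqr : q < r) (hceil : ⌈q⌉ = ⌈r⌉) :
    USeq q ⊆ USeq r := by
  have hr : 1 < r := hq.trans hqr
  have hM : topDigit r = topDigit q := by rw [topDigit, topDigit, hceil]
  rintro c ⟨x, ⟨hcq, hx⟩, huniq⟩
  have hc : ∀ i, c i ≤ topDigit q := fun i => (natCast_lt_iff_le_topDigit hq _).1 (hcq i)
  have htails := tails_of_univoque hq hc fun c' hc' hv =>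
    huniq c' ⟨fun i => (natCast_lt_iff_le_topDigit hq _).2 (hc' i), hx.trans hv.symm⟩
  refine ⟨seqVal r c, ⟨fun i => (hcq i).trans hqr, rfl⟩, fun c' hc' => ?_⟩
  refine univoque_of_tails hr hc (fun n => ⟨fun h => ?_, fun h => ?_⟩)
    (fun i => hM ▸ (natCast_lt_iff_le_topDigit hr _).1 (hc'.1 i)) hc'.2.symm
  · exact (seqVal_anti hq hqr.le fun i => hc (n + 1 + i)).trans_lt ((htails n).1 h)
  · exact (seqVal_anti hq hqr.le fun i => Nat.sub_le (topDigit q) _).trans_lt ((htails n).2 h)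
end

section
/- If 1 < q < r are real numbers with ⌈q⌉ = ⌈r⌉, then V_q' ⊆ U_r'; that is, the quasi-greedy expansion in base q of every element of V_q is the unique expansion in base r of some number. -/
noncomputable section

/-- The number represented by the digit sequence `c` in base `q`; it is meaningful for bounded
digits and `q > 1`, when the series converges. -/
def val (q : ℝ) (c : ℕ → ℕ) : ℝ := ∑' i : ℕ, (c i : ℝ) / q ^ (i + 1)

lemma val_summable {q : ℝ} (hq : 1 < q) {M : ℕ} {c : ℕ → ℕ} (hc : ∀ i, c i ≤ M) :
    Summable fun i : ℕ => (c i : ℝ) / q ^ (i + 1) := by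
  have hg : Summable fun i : ℕ => (M : ℝ) * (1 / q) ^ i :=
    (summable_geometric_of_lt_one (by positivity) (by rw [div_lt_one (by positivity)]; exact hq)).mul_left _
  refine Summable.of_nonneg_of_le (fun i => by positivity) (fun i => ?_) hg
  have h1 : (c i : ℝ) ≤ M := by exact_mod_cast hc i
  have h2 : q ^ i ≤ q ^ (i + 1) := pow_le_pow_right₀ hq.le (by omega)
  rw [one_div, inv_pow, ← div_eq_mul_inv]
  gcongr

lemma val_nonneg {q : ℝ} (hq : 1 < q) (c : ℕ → ℕ) : 0 ≤ val q c :=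
  tsum_nonneg fun i => by positivity

lemma val_split {q : ℝ} (hq : 1 < q) {M : ℕ} {c : ℕ → ℕ} (hc : ∀ i, c i ≤ M) (n : ℕ) :
    val q c = ∑ i ∈ Finset.range n, (c i : ℝ) / q ^ (i + 1) + val q (fun i => c (n + i)) / q ^ n := by
  unfold val
  rw [← (val_summable hq hc).sum_add_tsum_nat_add n, ← tsum_div_const]
  congr 1
  refine tsum_congr fun i => ?_
  rw [div_div, ← pow_add, add_comm i n]
  congr 2
  omega

/-- Digits that agree before `n`, with equal values, force the difference of the `n`-th digits to
be compensated by the tails. -/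
lemma val_tail_of_eq {q : ℝ} (hq : 1 < q) {M : ℕ} {c d : ℕ → ℕ} (hc : ∀ i, c i ≤ M)
    (hd : ∀ i, d i ≤ M) {n : ℕ} (hag : ∀ i, i < n → c i = d i) (h : val q c = val q d) :
    (c n : ℝ) + val q (fun i => c (n + 1 + i)) = d n + val q (fun i => d (n + 1 + i)) := by
  rw [val_split hq hc (n + 1), val_split hq hd (n + 1), Finset.sum_range_succ,
    Finset.sum_range_succ, Finset.sum_congr rfl (g := fun i => (d i : ℝ) / q ^ (i + 1))
      (fun i hi => by rw [hag i (Finset.mem_range.1 hi)])] at h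
  have hp : 0 < q ^ (n + 1) := by positivity
  have h' : ((c n : ℝ) + val q (fun i => c (n + 1 + i))) / q ^ (n + 1)
      = (d n + val q (fun i => d (n + 1 + i))) / q ^ (n + 1) := by
    rw [add_div, add_div]; linarith
  exact (div_left_inj' hp.ne').1 h'

/-- Raising the base strictly lowers the value of a nonzero sequence. -/
lemma val_lt_one_of_lt {q r : ℝ} (hq : 1 < q) (hqr : q < r) {M : ℕ} {c : ℕ → ℕ}
    (hc : ∀ i, c i ≤ M) (h : val q c ≤ 1) : val r c < 1 := by
  by_cases h0 : ∀ i, c i = 0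
  · simp [val, h0]
  · push Not at h0
    obtain ⟨n, hn⟩ := h0
    refine lt_of_lt_of_le ?_ h
    refine Summable.tsum_lt_tsum (i := n) (fun i => ?_) ?_ (val_summable (hq.trans hqr) hc)
      (val_summable hq hc)
    · gcongr
    · have : (0 : ℝ) < c n := by exact_mod_cast Nat.pos_of_ne_zero hn
      gcongr

lemma qgRem_nonneg {q x : ℝ} (hq : 1 < q) (hx : 0 ≤ x) (n : ℕ) : 0 ≤ qgRem q x n := by
  induction n with
  | zero => exact hx
  | succ n ih =>
    have hy : 0 ≤ q * qgRem q x n := by positivity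
    have h2 : qgDigit q (qgRem q x n) ≤ ⌈q * qgRem q x n⌉.toNat - 1 := min_le_right _ _
    have hceil : 0 ≤ ⌈q * qgRem q x n⌉ := Int.ceil_nonneg hy
    change 0 ≤ q * qgRem q x n - qgDigit q (qgRem q x n)
    rcases Nat.eq_zero_or_pos (qgDigit q (qgRem q x n)) with h0 | h0
    · rw [h0]; simpa using hy
    · have h3 : (qgDigit q (qgRem q x n) : ℤ) + 1 ≤ ⌈q * qgRem q x n⌉ := by omega
      have h4 : ((qgDigit q (qgRem q x n) : ℤ) : ℝ) < q * qgRem q x n := Int.lt_ceil.1 (by omega)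
      push_cast at h4
      linarith

/-- A quasi-greedy digit below the top digit leaves a remainder at most `1`: otherwise the next
larger digit would have been admissible. -/
lemma qgRem_succ_le_one {q x : ℝ} {n : ℕ} (h : quasiGreedy q x n < topDigit q) :
    qgRem q x (n + 1) ≤ 1 := by
  change q * qgRem q x n - qgDigit q (qgRem q x n) ≤ 1
  change qgDigit q (qgRem q x n) < topDigit q at h
  have h2 : qgDigit q (qgRem q x n) = ⌈q * qgRem q x n⌉.toNat - 1 := by
    unfold qgDigit at h ⊢; omega
  have h3 : ⌈q * qgRem q x n⌉ ≤ (qgDigit q (qgRem q x n) : ℤ) + 1 := by omega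
  have h4 := Int.ceil_le.1 h3
  push_cast at h4
  linarith

lemma quasiGreedy_le (q x : ℝ) (n : ℕ) : quasiGreedy q x n ≤ topDigit q := min_le_left _ _

lemma sum_quasiGreedy_add {q x : ℝ} (hq : 1 < q) (n k : ℕ) :
    ∑ i ∈ Finset.range k, (quasiGreedy q x (n + i) : ℝ) / q ^ (i + 1)
      + qgRem q x (n + k) / q ^ k = qgRem q x n := by
  induction k with
  | zero => simp
  | succ k ih =>
    rw [← ih, Finset.sum_range_succ, ← add_assoc n k 1]
    have : qgRem q x (n + k + 1) = q * qgRem q x (n + k) - quasiGreedy q x (n + k) := rfl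
    rw [this]
    have hq0 : q ≠ 0 := by positivity
    field_simp
    ring

lemma sum_quasiGreedy_le {q x : ℝ} (hq : 1 < q) (hx : 0 ≤ x) (n k : ℕ) :
    ∑ i ∈ Finset.range k, (quasiGreedy q x (n + i) : ℝ) / q ^ (i + 1) ≤ qgRem q x n := by
  have h := sum_quasiGreedy_add (x := x) hq n k
  have : 0 ≤ qgRem q x (n + k) / q ^ k := div_nonneg (qgRem_nonneg hq hx _) (by positivity)
  linarith

lemma val_quasiGreedy_le {q x : ℝ} (hq : 1 < q) (hx : 0 ≤ x) (n : ℕ) :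
    val q (fun i => quasiGreedy q x (n + i)) ≤ qgRem q x n :=
  Real.tsum_le_of_sum_range_le (fun i => by positivity) fun k => sum_quasiGreedy_le hq hx n k

lemma sum_alphaSeq_le {q : ℝ} (hq : 1 < q) (k : ℕ) :
    ∑ i ∈ Finset.range k, (alphaSeq q i : ℝ) / q ^ (i + 1) ≤ 1 := by
  simpa [alphaSeq, qgRem] using sum_quasiGreedy_le (x := 1) hq zero_le_one 0 k

/-- If `d`, and every tail of `d` following a digit below the top one, is lexicographically at most
`α(q)`, then `d` represents a number at most `1` in base `q`. At the first disagreement with `α(q)`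
the excess of the value over `1` is at most `1/q` times the excess of a later tail of the same
kind; iterating `k` times, from the value `C` of the constant top-digit sequence as a crude bound,
shows that the excess is at most `C / q ^ k`. -/
lemma val_le_one_of_lexLe {q : ℝ} (hq : 1 < q) {d : ℕ → ℕ} (hd : ∀ i, d i ≤ topDigit q)
    (h0 : lexLe d (alphaSeq q))
    (h1 : ∀ n, d n < topDigit q → lexLe (fun i => d (n + 1 + i)) (alphaSeq q)) :
    val q d ≤ 1 := by
  set C : ℝ := val q (fun _ => topDigit q) with hC
  have hC0 : 0 ≤ C := val_nonneg hq _
  have key : ∀ k : ℕ, ∀ e : ℕ → ℕ, (∀ i, e i ≤ topDigit q) → lexLe e (alphaSeq q) →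
      (∀ n, e n < topDigit q → lexLe (fun i => e (n + 1 + i)) (alphaSeq q)) →
      val q e ≤ 1 + C / q ^ k := by
    intro k
    induction k with
    | zero =>
      intro e he _ _
      have : val q e ≤ C :=
        Summable.tsum_le_tsum (fun i => by have := he i; gcongr) (val_summable hq he)
          (val_summable hq (M := topDigit q) fun _ => le_rfl)
      simp; linarith
    | succ k ih =>
      intro e he he0 he1
      have hpos : 0 ≤ C / q ^ (k + 1) := by positivity
      rcases he0 with ⟨n, hn, hlt⟩ | heq
      · have hαn : alphaSeq q n ≤ topDigit q := quasiGreedy_le _ _ _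
        have hI := ih (fun i => e (n + 1 + i)) (fun i => he _) (he1 n (by omega))
          (fun m hm => by
            have := he1 (n + 1 + m) hm
            convert this using 3
            ring)
        have hs := sum_alphaSeq_le hq (n + 1)
        rw [val_split hq he (n + 1)]
        rw [Finset.sum_range_succ] at hs ⊢
        rw [Finset.sum_congr rfl (g := fun i => (alphaSeq q i : ℝ) / q ^ (i + 1))
          (fun i hi => by rw [hn i (Finset.mem_range.1 hi)])]
        have hdig : (e n : ℝ) + 1 ≤ alphaSeq q n := by exact_mod_cast hlt
        have hstep : (e n : ℝ) / q ^ (n + 1) + val q (fun i => e (n + 1 + i)) / q ^ (n + 1)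
            ≤ (alphaSeq q n : ℝ) / q ^ (n + 1) + C / q ^ k / q ^ (n + 1) := by
          rw [← add_div, ← add_div]
          gcongr ?_ / _
          linarith
        have hlast : C / q ^ k / q ^ (n + 1) ≤ C / q ^ (k + 1) := by
          rw [div_div, ← pow_add]
          gcongr
          · exact hq.le
          · omega
        linarith
      · have : val q e ≤ 1 := by
          rw [heq]
          exact Real.tsum_le_of_sum_range_le (fun i => by positivity) fun k => sum_alphaSeq_le hq k
        linarith
  have hlim : Filter.Tendsto (fun k : ℕ => 1 + C / q ^ k) Filter.atTop (nhds (1 + 0)) :=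
    tendsto_const_nhds.add
      (tendsto_const_nhds.div_atTop (tendsto_pow_atTop_atTop_of_one_lt hq))
  rw [add_zero] at hlim
  exact ge_of_tendsto' hlim fun k => key k d hd h0 h1

/-- If `c` has all tails after non-top digits below `1`, and all reflected tails after nonzero
digits below `1`, then it is the only sequence of digits at most `M` with its value. -/
lemma eq_of_val_eq {r : ℝ} (hr : 1 < r) {M : ℕ} {c c' : ℕ → ℕ} (hc : ∀ i, c i ≤ M)
    (hc' : ∀ i, c' i ≤ M)
    (hlow : ∀ n, c n < M → val r (fun i => c (n + 1 + i)) < 1)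
    (hhigh : ∀ n, 0 < c n → val r (fun i => M - c (n + 1 + i)) < 1)
    (h : val r c' = val r c) : c' = c := by
  by_contra hne
  have hex : ∃ n, c' n ≠ c n := Function.ne_iff.1 hne
  classical
  have hn := Nat.find_spec hex
  have hag : ∀ i, i < Nat.find hex → c' i = c i := fun i hi => not_not.1 (Nat.find_min hex hi)
  set n := Nat.find hex
  have ht := val_tail_of_eq hr hc' hc hag h
  rcases lt_or_gt_of_ne hn with hlt | hgt
  · have h1 := hhigh n (by omega)
    have hb : val r (fun i => c' (n + 1 + i))
        ≤ val r (fun i => M - c (n + 1 + i)) + val r (fun i => c (n + 1 + i)) := by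
      have s1 := val_summable hr (M := M) (c := fun i => M - c (n + 1 + i)) (fun i => by omega)
      have s2 := val_summable hr (M := M) (c := fun i => c (n + 1 + i)) (fun i => hc _)
      have s3 := val_summable hr (M := M) (c := fun i => c' (n + 1 + i)) (fun i => hc' _)
      unfold val
      rw [← s1.tsum_add s2]
      refine Summable.tsum_le_tsum (fun i => ?_) s3 (s1.add s2)
      rw [← add_div]
      gcongr
      have a1 := hc (n + 1 + i)
      have a2 := hc' (n + 1 + i)
      exact_mod_cast (by omega : c' (n + 1 + i) ≤ M - c (n + 1 + i) + c (n + 1 + i))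
    have hd : (c' n : ℝ) + 1 ≤ c n := by exact_mod_cast hlt
    linarith
  · have h1 := hlow n (by have := hc' n; omega)
    have h2 := val_nonneg hr (fun i => c' (n + 1 + i))
    have hd : (c n : ℝ) + 1 ≤ c' n := by exact_mod_cast hgt
    linarith

lemma le_topDigit {r : ℝ} {m : ℕ} (h : (m : ℝ) < r) : m ≤ topDigit r := by
  have : (m : ℤ) < ⌈r⌉ := Int.lt_ceil.2 (by exact_mod_cast h)
  unfold topDigit
  omega

lemma topDigit_lt_s9 {r : ℝ} (hr : 1 < r) : (topDigit r : ℝ) < r := by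
  have h1 : (1 : ℤ) < ⌈r⌉ := Int.lt_ceil.2 (by exact_mod_cast hr)
  have h2 : ((topDigit r : ℤ) : ℝ) < r := Int.lt_ceil.1 (by unfold topDigit; omega)
  exact_mod_cast h2

end

/-- If `1 < q < r` and `⌈q⌉ = ⌈r⌉`, then `𝒱_q' ⊆ 𝒰_r'`. -/
theorem VSeq_subset_USeq_of_lt (q r : ℝ) (hq : 1 < q) (hqr : q < r) (hceil : ⌈q⌉ = ⌈r⌉) :
    VSeq q ⊆ USeq r := by
  rintro _ ⟨x, ⟨⟨hx0, _⟩, hV⟩, rfl⟩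
  have hr : 1 < r := hq.trans hqr
  have htop : topDigit r = topDigit q := by unfold topDigit; rw [hceil]
  have ha := quasiGreedy_le q x
  refine ⟨val r (quasiGreedy q x), ⟨fun i => ?_, rfl⟩, fun c' hc' => ?_⟩
  · have h1 : (quasiGreedy q x i : ℝ) ≤ topDigit q := by exact_mod_cast ha i
    exact (h1.trans_lt (topDigit_lt_s9 hq)).trans hqr
  · refine eq_of_val_eq hr ha (fun i => htop ▸ le_topDigit (hc'.1 i)) (fun n hn => ?_)
      (fun n hn => ?_) hc'.2.symm
    · exact val_lt_one_of_lt hq hqr (fun i => ha _)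
        ((val_quasiGreedy_le hq hx0 (n + 1)).trans (qgRem_succ_le_one hn))
    · refine val_lt_one_of_lt hq hqr (fun i => Nat.sub_le _ _)
        (val_le_one_of_lexLe hq (fun i => Nat.sub_le _ _) (hV n hn) fun m hm => ?_)
      -- A reflected digit below the top one is the reflection of a nonzero digit.
      have hpos : 0 < quasiGreedy q x (n + 1 + m) := by
        by_contra h0
        simp [Nat.eq_zero_of_not_pos h0] at hm
      convert hV (n + 1 + m) hpos using 4
      ring
end
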